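/- Let α ∈ (0,2), n ∈ ℕ (n ≥ 0), and x ∈ ℝ. Define SC_{2n+1}(x) = −Im μ_n(x) (the sine-like Christov function). Then y ↦ (SC_{2n+1}'(x−y) − SC_{2n+1}'(x+y))·y^(−α) is absolutely integrable on (0,∞), and (c_α/α)·∫₀^∞ (SC_{2n+1}'(x−y) − SC_{2n+1}'(x+y))·y^(−α) dy = (Γ(1+α)/(1+x²)^((n+1+α)/2))·cos((n+1+α)·arccot(x) − πα/2)·∑_{l≥0, 2l≤n} (−1)^l·C(n,2l)·x^(n−2l)·H_α(2l) + (Γ(1+α)/(1+x²)^((n+1+α)/2))·sin((n+1+α)·arccot(x) − πα/2)·∑_{l≥0, 2l+1≤n} (−1)^l·C(n,2l+1)·x^(n−1−2l)·H_α(2l+1). -/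

import Mathlib

open MeasureTheory Finset

/-- The constant `c_α = α·2^(α−1)·Γ(1/2+α/2)/(√π·Γ(1−α/2))`. -/
noncomputable def cFrac (α : ℝ) : ℝ :=
  α * 2 ^ (α - 1) * Real.Gamma (1 / 2 + α / 2) / (Real.sqrt Real.pi * Real.Gamma (1 - α / 2))

/-- The complex Higgins function `λ_n(x) = ((ix−1)/(ix+1))^n`. -/
noncomputable def higgins (n : ℤ) (x : ℝ) : ℂ :=
  ((Complex.I * (x : ℂ) - 1) / (Complex.I * (x : ℂ) + 1)) ^ n

/-- The derivative `λ_n'`. -/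
noncomputable def higgins' (n : ℤ) (x : ℝ) : ℂ := deriv (higgins n) x

/-- The complex Christov function `μ_n(x) = (ix−1)^n/(ix+1)^(n+1)`. -/
noncomputable def christov (n : ℤ) (x : ℝ) : ℂ :=
  (Complex.I * (x : ℂ) - 1) ^ n / (Complex.I * (x : ℂ) + 1) ^ (n + 1)

/-- The derivative `μ_n'`. -/
noncomputable def christov' (n : ℤ) (x : ℝ) : ℂ := deriv (christov n) x

/-- Generalized binomial coefficient `C(z,k) = z(z−1)⋯(z−k+1)/k!` over `ℂ`. -/
noncomputable def gbinom (z : ℂ) (k : ℕ) : ℂ :=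
  (∏ i ∈ Finset.range k, (z - (i : ℂ))) / (k.factorial : ℂ)

/-- Generalized binomial coefficient `C(z,k) = z(z−1)⋯(z−k+1)/k!` over `ℝ`. -/
noncomputable def gbinomR (z : ℝ) (k : ℕ) : ℝ :=
  (∏ i ∈ Finset.range k, (z - (i : ℝ))) / (k.factorial : ℝ)

/-- Rising factorial (Pochhammer symbol) `(z)_k = z(z+1)⋯(z+k−1)` over `ℂ`. -/
noncomputable def poch (z : ℂ) (k : ℕ) : ℂ := ∏ i ∈ Finset.range k, (z + (i : ℂ))

/-- `G_α(l) = (1/(l+1))·∑_{k=0}^{l} C(l+1,k+1)·C(−1−α,k)·2^k = ₂F₁(−l, 1+α; 2; 2)`, over `ℂ`. -/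
noncomputable def Gc (α : ℝ) (l : ℕ) : ℂ :=
  (1 / ((l : ℂ) + 1)) * ∑ k ∈ Finset.range (l + 1),
    gbinom ((l : ℂ) + 1) (k + 1) * gbinom (-1 - (α : ℂ)) k * 2 ^ k

/-- `G_α(l) = (1/(l+1))·∑_{k=0}^{l} C(l+1,k+1)·C(−1−α,k)·2^k = ₂F₁(−l, 1+α; 2; 2)`, over `ℝ`. -/
noncomputable def GR (α : ℝ) (l : ℕ) : ℝ :=
  (1 / ((l : ℝ) + 1)) * ∑ k ∈ Finset.range (l + 1),
    gbinomR ((l : ℝ) + 1) (k + 1) * gbinomR (-1 - α) k * 2 ^ k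

/-- `H_α(l) = ∑_{k=0}^{l} C(l,k)·C(−1−α,k)·2^k = ₂F₁(−l, 1+α; 1; 2)`, over `ℂ`. -/
noncomputable def Hc (α : ℝ) (l : ℕ) : ℂ :=
  ∑ k ∈ Finset.range (l + 1), gbinom (l : ℂ) k * gbinom (-1 - (α : ℂ)) k * 2 ^ k

/-- `H_α(l) = ∑_{k=0}^{l} C(l,k)·C(−1−α,k)·2^k = ₂F₁(−l, 1+α; 1; 2)`, over `ℝ`. -/
noncomputable def HR (α : ℝ) (l : ℕ) : ℝ :=
  ∑ k ∈ Finset.range (l + 1), gbinomR (l : ℝ) k * gbinomR (-1 - α) k * 2 ^ k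

/-- `arccot(x) = π/2 − arctan(x) ∈ (0,π)`. -/
noncomputable def arccot (x : ℝ) : ℝ := Real.pi / 2 - Real.arctan x

/-- The sine-like Christov function `SC_{2n+1}(x) = −Im μ_n(x)`. -/
noncomputable def SC (n : ℕ) (x : ℝ) : ℝ := -(christov (n : ℤ) x).im

/-- The derivative `SC_{2n+1}'`. -/
noncomputable def SC' (n : ℕ) (x : ℝ) : ℝ := deriv (SC n) x


/-- integrability of `t^(a-1) e^{-(1+ix)t}` -/
lemma fl_int (a : ℝ) (ha : 0 < a) (x : ℝ) :
    IntegrableOn (fun t : ℝ => ((t ^ (a - 1) : ℝ) : ℂ) * Complex.exp (-(1 + Complex.I * x) * t))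
      (Set.Ioi 0) := by
  have h := Real.GammaIntegral_convergent ha
  refine Integrable.mono' h ?_ ?_
  · apply Measurable.aestronglyMeasurable
    fun_prop
  · filter_upwards [ae_restrict_mem measurableSet_Ioi] with t ht
    have ht0 : (0 : ℝ) < t := ht
    rw [norm_mul, Complex.norm_real, Complex.norm_exp, Real.norm_of_nonneg (by positivity)]
    simp [mul_comm]

lemma fl_norm_exp (x t : ℝ) : ‖Complex.exp (-(1 + Complex.I * x) * t)‖ = Real.exp (-t) := by
  rw [Complex.norm_exp]; simp

lemma fl_ibp (a : ℝ) (ha : 0 < a) (x : ℝ) :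
    (1 + Complex.I * x) * ∫ t in Set.Ioi (0 : ℝ),
        ((t ^ a : ℝ) : ℂ) * Complex.exp (-(1 + Complex.I * x) * t) =
      a * ∫ t in Set.Ioi (0 : ℝ),
        ((t ^ (a - 1) : ℝ) : ℂ) * Complex.exp (-(1 + Complex.I * x) * t) := by
  have h1 := fl_int a ha x
  have h2 := fl_int (a + 1) (by linarith) x
  simp only [add_sub_cancel_right] at h2
  have key := integral_Ioi_of_hasDerivAt_of_tendsto (a := 0) (m := 0)
    (f := fun t : ℝ => ((t ^ a : ℝ) : ℂ) * Complex.exp (-(1 + Complex.I * x) * t))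
    (f' := fun t : ℝ => a * (((t ^ (a - 1) : ℝ) : ℂ) * Complex.exp (-(1 + Complex.I * x) * t))
      - (1 + Complex.I * x) * (((t ^ a : ℝ) : ℂ) * Complex.exp (-(1 + Complex.I * x) * t)))
    ?_ ?_ ?_ ?_
  · rw [integral_sub (h1.const_mul _) (h2.const_mul _), integral_const_mul, integral_const_mul] at key
    simp [Real.zero_rpow ha.ne'] at key
    rw [sub_eq_zero] at key
    simpa using key.symm
  · apply ContinuousAt.continuousWithinAt
    have : ContinuousAt (fun t : ℝ => t ^ a) 0 := Real.continuousAt_rpow_const _ _ (Or.inr ha.le)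
    fun_prop
  · intro t ht
    have ht0 : (0 : ℝ) < t := ht
    have e1 : HasDerivAt (fun t : ℝ => ((t ^ a : ℝ) : ℂ)) ((a * t ^ (a - 1) : ℝ) : ℂ) t :=
      (Real.hasDerivAt_rpow_const (Or.inl ht0.ne')).ofReal_comp
    have e2 : HasDerivAt (fun t : ℝ => Complex.exp (-(1 + Complex.I * x) * t))
        (Complex.exp (-(1 + Complex.I * x) * t) * (-(1 + Complex.I * x) * 1)) t :=
      ((Complex.ofRealCLM.hasDerivAt (x := t)).const_mul (-(1 + Complex.I * x))).cexp
    convert! e1.mul e2 using 1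
    push_cast
    ring
  · exact (h1.const_mul _).sub (h2.const_mul _)
  · rw [tendsto_zero_iff_norm_tendsto_zero]
    have := tendsto_rpow_mul_exp_neg_mul_atTop_nhds_zero a 1 one_pos
    refine this.congr' ?_
    filter_upwards [Filter.eventually_gt_atTop 0] with t ht
    rw [norm_mul, fl_norm_exp, Complex.norm_real, Real.norm_of_nonneg (by positivity)]
    simp

lemma fl_hasDeriv (a : ℝ) (ha : 0 < a) (x : ℝ) :
    HasDerivAt (fun x : ℝ => ∫ t in Set.Ioi (0 : ℝ),
        ((t ^ (a - 1) : ℝ) : ℂ) * Complex.exp (-(1 + Complex.I * x) * t))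
      (∫ t in Set.Ioi (0 : ℝ),
        (-Complex.I) * (((t ^ a : ℝ) : ℂ) * Complex.exp (-(1 + Complex.I * x) * t))) x := by
  have hb := Real.GammaIntegral_convergent (s := a + 1) (by linarith)
  simp only [add_sub_cancel_right] at hb
  refine (hasDerivAt_integral_of_dominated_loc_of_deriv_le (s := Set.univ) Filter.univ_mem
    (F := fun (x : ℝ) (t : ℝ) => ((t ^ (a - 1) : ℝ) : ℂ) * Complex.exp (-(1 + Complex.I * x) * t))
    (F' := fun (x : ℝ) (t : ℝ) =>
      (-Complex.I) * (((t ^ a : ℝ) : ℂ) * Complex.exp (-(1 + Complex.I * x) * t)))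
    (bound := fun t => Real.exp (-t) * t ^ a) ?_ (fl_int a ha x) ?_ ?_ hb ?_).2
  · exact Filter.Eventually.of_forall fun y => (fl_int a ha y).aestronglyMeasurable
  · apply Measurable.aestronglyMeasurable
    fun_prop
  · filter_upwards [ae_restrict_mem measurableSet_Ioi] with t ht y _
    have ht0 : (0 : ℝ) < t := ht
    rw [norm_mul, norm_mul, fl_norm_exp, Complex.norm_real, Real.norm_of_nonneg (by positivity)]
    simp [mul_comm]
  · filter_upwards [ae_restrict_mem measurableSet_Ioi] with t ht y _
    have ht0 : (0 : ℝ) < t := ht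
    have e2 : HasDerivAt (fun y : ℝ => Complex.exp (-(1 + Complex.I * y) * t))
        (Complex.exp (-(1 + Complex.I * y) * t) * (-(Complex.I * 1) * t)) y :=
      (((((Complex.ofRealCLM.hasDerivAt (x := y)).const_mul Complex.I).const_add 1).neg).mul_const
        (t : ℂ)).cexp
    convert! e2.const_mul ((t ^ (a - 1) : ℝ) : ℂ) using 1
    have : t ^ a = t ^ (a - 1) * t := by
      rw [← Real.rpow_add_one ht0.ne']; simp
    rw [this]
    push_cast
    ring

lemma fl_slit (x : ℝ) : 1 + Complex.I * x ∈ Complex.slitPlane := by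
  left; simp

lemma fl_ne (x : ℝ) : 1 + Complex.I * (x : ℂ) ≠ 0 := Complex.slitPlane_ne_zero (fl_slit x)

lemma fl_lap (a : ℝ) (ha : 0 < a) (x : ℝ) :
    ∫ t in Set.Ioi (0 : ℝ), ((t ^ (a - 1) : ℝ) : ℂ) * Complex.exp (-(1 + Complex.I * x) * t)
      = Real.Gamma a * (1 + Complex.I * x) ^ (-(a : ℂ)) := by
  set L : ℝ → ℂ := fun x => ∫ t in Set.Ioi (0 : ℝ),
        ((t ^ (a - 1) : ℝ) : ℂ) * Complex.exp (-(1 + Complex.I * x) * t) with hL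
  have hd : ∀ y : ℝ, HasDerivAt (fun y : ℝ => (1 + Complex.I * (y : ℂ)) ^ (a : ℂ) * L y) 0 y := by
    intro y
    have e0 : HasDerivAt (fun y : ℝ => 1 + Complex.I * (y : ℂ)) (Complex.I * 1) y :=
      ((Complex.ofRealCLM.hasDerivAt (x := y)).const_mul Complex.I).const_add 1
    have e1 : HasDerivAt (fun z : ℂ => z ^ (a : ℂ)) _ (1 + Complex.I * (y : ℂ)) :=
      (hasDerivAt_id (1 + Complex.I * (y : ℂ))).cpow_const (c := (a : ℂ)) (fl_slit y)
    have hLd : HasDerivAt L _ y := fl_hasDeriv a ha y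
    have e2 := (e1.comp_of_eq y e0 rfl).mul hLd
    convert! e2 using 1
    rw [integral_const_mul]
    have hib := fl_ibp a ha y
    have hne := fl_ne y
    rw [show (∫ t in Set.Ioi (0 : ℝ),
        ((t ^ a : ℝ) : ℂ) * Complex.exp (-(1 + Complex.I * y) * t)) =
        a * L y / (1 + Complex.I * y) from by rw [eq_div_iff hne, mul_comm, hib]]
    simp only [Function.comp, id]
    rw [Complex.cpow_sub _ _ hne, Complex.cpow_one]
    field_simp
    ring
  have hc := is_const_of_deriv_eq_zero (f := fun y : ℝ => (1 + Complex.I * (y : ℂ)) ^ (a : ℂ) * L y)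
    (fun y => (hd y).differentiableAt) (fun y => (hd y).deriv) x 0
  have h0 : L 0 = Real.Gamma a := by
    rw [hL, Real.Gamma_eq_integral ha, ← integral_complex_ofReal]
    refine setIntegral_congr_fun measurableSet_Ioi fun t ht => ?_
    simp [mul_comm]
  simp only [h0, Complex.ofReal_zero, mul_zero, add_zero, Complex.one_cpow, one_mul] at hc
  change L x = _
  rw [← hc, Complex.cpow_neg]
  have : (1 + Complex.I * (x : ℂ)) ^ (a : ℂ) ≠ 0 := by
    rw [Complex.cpow_def_of_ne_zero (fl_ne x)]; exact Complex.exp_ne_zero _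
  field_simp


/-- the sine transform -/
noncomputable def flJ (x : ℝ) (m : ℕ) (y : ℝ) : ℂ :=
  ∫ t in Set.Ioi (0 : ℝ), ((t ^ m : ℝ) : ℂ) * Complex.exp (-(1 + Complex.I * x) * t) * Real.sin (t * y)

lemma fl_intN (m : ℕ) (x : ℝ) :
    IntegrableOn (fun t : ℝ => ((t ^ m : ℝ) : ℂ) * Complex.exp (-(1 + Complex.I * x) * t))
      (Set.Ioi 0) := by
  have := fl_int (m + 1) (by positivity) x
  simpa only [add_sub_cancel_right, Real.rpow_natCast] using this

lemma fl_lapN (m : ℕ) (x : ℝ) :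
    ∫ t in Set.Ioi (0 : ℝ), ((t ^ m : ℝ) : ℂ) * Complex.exp (-(1 + Complex.I * x) * t)
      = (m.factorial : ℂ) * ((1 + Complex.I * x) ^ (m + 1))⁻¹ := by
  have := fl_lap (m + 1) (by positivity) x
  simp only [add_sub_cancel_right, Real.rpow_natCast, Real.Gamma_nat_eq_factorial] at this
  rw [this, Complex.cpow_neg]
  congr 2
  rw [← Complex.cpow_natCast]; push_cast; rfl

lemma flJ_eq (x : ℝ) (m : ℕ) (y : ℝ) :
    ((1 + Complex.I * ((x - y : ℝ) : ℂ)) ^ (m + 1))⁻¹ - ((1 + Complex.I * ((x + y : ℝ) : ℂ)) ^ (m + 1))⁻¹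
      = 2 * Complex.I / (m.factorial : ℂ) * flJ x m y := by
  have hm : (m.factorial : ℂ) ≠ 0 := by exact_mod_cast m.factorial_ne_zero
  have h : (m.factorial : ℂ) * ((1 + Complex.I * ((x - y : ℝ) : ℂ)) ^ (m + 1))⁻¹ -
      (m.factorial : ℂ) * ((1 + Complex.I * ((x + y : ℝ) : ℂ)) ^ (m + 1))⁻¹ =
      2 * Complex.I * flJ x m y := by
    rw [← fl_lapN, ← fl_lapN, ← integral_sub (fl_intN _ _) (fl_intN _ _), flJ, ← integral_const_mul]
    congr 1
    ext t
    push_cast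
    rw [Complex.sin]
    rw [show -(1 + Complex.I * (x - y : ℂ)) * t = -(1 + Complex.I * x) * t + (t * y) * Complex.I by ring,
      show -(1 + Complex.I * (x + y : ℂ)) * t = -(1 + Complex.I * x) * t + -(t * y) * Complex.I by ring,
      Complex.exp_add, Complex.exp_add]
    linear_combination (-1 : ℂ) * (t : ℂ) ^ m * Complex.exp (-(1 + Complex.I * x) * t) *
      (Complex.exp (-(t * y) * Complex.I) - Complex.exp ((t * y) * Complex.I)) * Complex.I_sq
  rw [div_mul_eq_mul_div, eq_div_iff hm, ← h]
  ring

lemma fl_cont (m : ℕ) (x : ℝ) (c : ℝ) :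
    Continuous fun y : ℝ => ((1 + Complex.I * ((x + c * y : ℝ) : ℂ)) ^ (m + 1))⁻¹ := by
  refine Continuous.inv₀ (by fun_prop) fun y => pow_ne_zero _ (fl_ne _)

lemma flJ_eq' (x : ℝ) (m : ℕ) : flJ x m = fun y : ℝ => (m.factorial : ℂ) / (2 * Complex.I) *
    (((1 + Complex.I * ((x + (-1) * y : ℝ) : ℂ)) ^ (m + 1))⁻¹
      - ((1 + Complex.I * ((x + 1 * y : ℝ) : ℂ)) ^ (m + 1))⁻¹) := by
  ext y
  have hm : (m.factorial : ℂ) ≠ 0 := by exact_mod_cast m.factorial_ne_zero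
  rw [show x + (-1) * y = x - y by ring, one_mul, flJ_eq]
  have := Complex.I_ne_zero
  field_simp

lemma flJ_cont (x : ℝ) (m : ℕ) : Continuous (flJ x m) := by
  rw [flJ_eq']
  exact ((fl_cont m x (-1)).sub (fl_cont m x 1)).const_smul ((m.factorial : ℂ) / (2 * Complex.I))

lemma fl_inv_bound (m : ℕ) (x : ℝ) (hm : 1 ≤ m) :
    ‖((1 + Complex.I * (x : ℂ)) ^ (m + 1))⁻¹‖ ≤ (1 + x ^ 2)⁻¹ := by
  rw [norm_inv, norm_pow]
  have h2 : ‖1 + Complex.I * (x : ℂ)‖ ^ 2 = 1 + x ^ 2 := by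
    rw [← Complex.normSq_eq_norm_sq, Complex.normSq_apply]; simp; ring
  have h1 : 1 ≤ ‖1 + Complex.I * (x : ℂ)‖ := by
    have := norm_nonneg (1 + Complex.I * (x : ℂ))
    nlinarith [sq_nonneg x]
  rw [← h2]
  exact inv_anti₀ (by positivity) (pow_le_pow_right₀ h1 (by omega))

lemma flJ_int (x : ℝ) (m : ℕ) (hm : 1 ≤ m) : Integrable (flJ x m) := by
  rw [flJ_eq']
  have h : ∀ c : ℝ, c ≠ 0 → Integrable (fun y : ℝ => ((1 + Complex.I * ((x + c * y : ℝ) : ℂ)) ^ (m + 1))⁻¹) := by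
    intro c hc
    have h1 : Integrable (fun y : ℝ => (1 + (x + c * y) ^ 2)⁻¹) :=
      (integrable_inv_one_add_sq.comp_add_left x).comp_mul_left' hc
    refine h1.mono' (fl_cont m x c).aestronglyMeasurable ?_
    exact Filter.Eventually.of_forall fun y => fl_inv_bound m _ hm
  exact ((h (-1) (by norm_num)).sub (h 1 one_ne_zero)).const_mul _

lemma flJ_bound (x : ℝ) (m : ℕ) (y : ℝ) (hy : 0 ≤ y) :
    ‖flJ x m y‖ ≤ Real.Gamma (m + 2) * y := by
  rw [flJ, Real.Gamma_eq_integral (by positivity), ← integral_mul_const]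
  have hb := Real.GammaIntegral_convergent (s := (m : ℝ) + 2) (by positivity)
  refine norm_integral_le_of_norm_le (hb.mul_const y) ?_
  filter_upwards [ae_restrict_mem measurableSet_Ioi] with t ht
  have ht0 : (0 : ℝ) < t := ht
  rw [norm_mul, norm_mul, fl_norm_exp, Complex.norm_real, Complex.norm_real,
    Real.norm_of_nonneg (by positivity), show (m : ℝ) + 2 - 1 = ((m + 1 : ℕ) : ℝ) by push_cast; ring,
    Real.rpow_natCast, pow_succ]
  have : ‖Real.sin (t * y)‖ ≤ t * y := by
    rw [Real.norm_eq_abs]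
    exact (Real.abs_sin_le_abs (x := t * y)).trans (abs_of_nonneg (by positivity)).le
  calc t ^ m * Real.exp (-t) * ‖Real.sin (t * y)‖ ≤ t ^ m * Real.exp (-t) * (t * y) := by gcongr
    _ = _ := by ring

lemma flJ_intOn (x : ℝ) (m : ℕ) (hm : 1 ≤ m) (α : ℝ) (hα : α ∈ Set.Ioo (0 : ℝ) 2) :
    IntegrableOn (fun y : ℝ => flJ x m y * ((y ^ (-α) : ℝ) : ℂ)) (Set.Ioi 0) := by
  have hmeas : Measurable (fun y : ℝ => flJ x m y * ((y ^ (-α) : ℝ) : ℂ)) := by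
    have := (flJ_cont x m).measurable
    fun_prop
  rw [← Set.Ioc_union_Ioi_eq_Ioi (zero_le_one' ℝ)]
  refine IntegrableOn.union ?_ ?_
  · have h1 : IntegrableOn (fun y : ℝ => y ^ (1 - α)) (Set.Ioc 0 1) := by
      rw [← intervalIntegrable_iff_integrableOn_Ioc_of_le zero_le_one]
      exact intervalIntegral.intervalIntegrable_rpow' (by linarith [hα.2])
    refine Integrable.mono' (h1.const_mul (Real.Gamma (m + 2))) hmeas.aestronglyMeasurable ?_
    filter_upwards [ae_restrict_mem measurableSet_Ioc] with y hy
    have hy0 : 0 < y := hy.1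
    rw [norm_mul, Complex.norm_real, Real.norm_of_nonneg (by positivity),
      sub_eq_add_neg, Real.rpow_add hy0, Real.rpow_one, ← mul_assoc]
    gcongr
    exact flJ_bound x m y hy0.le
  · refine Integrable.mono' (flJ_int x m hm).norm.integrableOn hmeas.aestronglyMeasurable ?_
    filter_upwards [ae_restrict_mem measurableSet_Ioi] with y hy
    have hy1 : 1 < y := hy
    rw [norm_mul, Complex.norm_real, Real.norm_of_nonneg (by positivity)]
    exact mul_le_of_le_one_right (norm_nonneg _)
      (Real.rpow_le_one_of_one_le_of_nonpos hy1.le (by linarith [hα.1]))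


/-- the beta-type constant -/
noncomputable def flB (α : ℝ) : ℝ := 1 / 2 * Real.Gamma (α / 2) * Real.Gamma (1 - α / 2)

lemma flB_pos (α : ℝ) (hα : α ∈ Set.Ioo (0 : ℝ) 2) : 0 < flB α := by
  have h1 := Real.Gamma_pos_of_pos (s := α / 2) (by linarith [hα.1])
  have h2 := Real.Gamma_pos_of_pos (s := 1 - α / 2) (by linarith [hα.2])
  unfold flB
  positivity

lemma fl_beta (α : ℝ) (hα : α ∈ Set.Ioo (0 : ℝ) 2) (t : ℝ) (ht : 0 < t) :
    ∫ τ in Set.Ioi (0 : ℝ), τ ^ (α - 1) / (t ^ 2 + τ ^ 2) = flB α * t ^ (α - 2) := by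
  obtain ⟨h0, h2⟩ := hα
  have inner1 : ∀ τ : ℝ, 0 < τ → ∫ v in Set.Ioi (0 : ℝ),
      τ ^ (α - 1) * Real.exp (-(v * (t ^ 2 + τ ^ 2))) = τ ^ (α - 1) / (t ^ 2 + τ ^ 2) := by
    intro τ hτ
    rw [integral_const_mul]
    have := Real.integral_rpow_mul_exp_neg_mul_Ioi (a := 1) (r := t ^ 2 + τ ^ 2) one_pos (by positivity)
    simp only [sub_self, Real.rpow_zero, one_mul, Real.rpow_one, Real.Gamma_one, mul_one] at this
    simp_rw [mul_comm _ (t ^ 2 + τ ^ 2)]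
    rw [this]; ring
  have inner2 : ∀ v : ℝ, 0 < v → ∫ τ in Set.Ioi (0 : ℝ),
      τ ^ (α - 1) * Real.exp (-(v * (t ^ 2 + τ ^ 2))) =
        1 / 2 * Real.Gamma (α / 2) * (v ^ ((1 - α / 2) - 1) * Real.exp (-(t ^ 2 * v))) := by
    intro v hv
    have := integral_rpow_mul_exp_neg_mul_rpow (p := 2) (q := α - 1) (b := v) two_pos (by linarith) hv
    simp only [Real.rpow_two, sub_add_cancel] at this
    rw [show 1 - α / 2 - 1 = -α / 2 by ring]
    have e : ∀ τ : ℝ, τ ^ (α - 1) * Real.exp (-(v * (t ^ 2 + τ ^ 2))) =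
        (τ ^ (α - 1) * Real.exp (-v * τ ^ 2)) * Real.exp (-(t ^ 2 * v)) := by
      intro τ
      rw [mul_assoc, ← Real.exp_add]; ring_nf
    simp_rw [e]
    rw [integral_mul_const, this]
    ring
  have hval := Real.integral_rpow_mul_exp_neg_mul_Ioi (a := 1 - α / 2) (r := t ^ 2)
    (by linarith) (by positivity)
  have hGpos := Real.Gamma_pos_of_pos (s := 1 - α / 2) (by linarith)
  have hIntg : IntegrableOn (fun v : ℝ => v ^ ((1 - α / 2) - 1) * Real.exp (-(t ^ 2 * v))) (Set.Ioi 0) := by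
    by_contra hcon
    rw [integral_undef hcon] at hval
    have : (0 : ℝ) < (1 / t ^ 2) ^ (1 - α / 2) * Real.Gamma (1 - α / 2) := by positivity
    linarith
  have hprod : Integrable (Function.uncurry fun τ v : ℝ => τ ^ (α - 1) * Real.exp (-(v * (t ^ 2 + τ ^ 2))))
      ((volume.restrict (Set.Ioi 0)).prod (volume.restrict (Set.Ioi 0))) := by
    rw [integrable_prod_iff']
    · constructor
      · filter_upwards [ae_restrict_mem measurableSet_Ioi] with v hv
        have hv0 : (0 : ℝ) < v := hv
        have := integrableOn_rpow_mul_exp_neg_mul_sq hv0 (s := α - 1) (by linarith)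
        refine (this.mul_const (Real.exp (-(t ^ 2 * v)))).congr ?_
        refine Filter.Eventually.of_forall fun τ => ?_
        simp only [Function.uncurry]
        rw [mul_assoc, ← Real.exp_add]; ring_nf
      · refine (hIntg.const_mul (1 / 2 * Real.Gamma (α / 2))).congr ?_
        filter_upwards [ae_restrict_mem measurableSet_Ioi] with v hv
        rw [← inner2 v hv]
        refine setIntegral_congr_fun measurableSet_Ioi fun τ hτ => ?_
        have hτ0 : (0 : ℝ) < τ := hτ
        simp only [Function.uncurry]
        rw [Real.norm_of_nonneg (by positivity)]
    · apply Measurable.aestronglyMeasurable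
      simp only [Function.uncurry_def]
      fun_prop
  have hsw := integral_integral_swap hprod
  rw [setIntegral_congr_fun measurableSet_Ioi (fun τ hτ => inner1 τ hτ),
    setIntegral_congr_fun measurableSet_Ioi (fun v hv => inner2 v hv), integral_const_mul, hval] at hsw
  rw [hsw, flB, one_div (t ^ 2), Real.inv_rpow (by positivity), ← Real.rpow_neg (by positivity),
    ← Real.rpow_natCast, ← Real.rpow_mul ht.le]
  push_cast
  rw [show 2 * -(1 - α / 2) = α - 2 by ring]
  ring

lemma fl_beta_int (α : ℝ) (hα : α ∈ Set.Ioo (0 : ℝ) 2) (t : ℝ) (ht : 0 < t) :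
    IntegrableOn (fun τ : ℝ => τ ^ (α - 1) / (t ^ 2 + τ ^ 2)) (Set.Ioi 0) := by
  have h := fl_beta α hα t ht
  by_contra hcon
  rw [integral_undef hcon] at h
  have := flB_pos α hα
  have : 0 < flB α * t ^ (α - 2) := by positivity
  linarith

lemma fl_sinlap (t τ : ℝ) (ht : 0 < t) (hτ : 0 < τ) :
    ∫ y in Set.Ioi (0 : ℝ), ((Real.sin (t * y) : ℝ) : ℂ) * ((Real.exp (-(y * τ)) : ℝ) : ℂ) =
      ((t / (t ^ 2 + τ ^ 2) : ℝ) : ℂ) := by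
  have h1 : (-(τ : ℂ) + t * Complex.I).re < 0 := by simpa using hτ
  have h2 : (-(τ : ℂ) - t * Complex.I).re < 0 := by simpa using hτ
  have i1 := integrableOn_exp_mul_complex_Ioi h1 0
  have i2 := integrableOn_exp_mul_complex_Ioi h2 0
  have e : ∀ y : ℝ, ((Real.sin (t * y) : ℝ) : ℂ) * ((Real.exp (-(y * τ)) : ℝ) : ℂ) =
      (Complex.I / 2) * (Complex.exp ((-(τ : ℂ) - t * Complex.I) * y) -
        Complex.exp ((-(τ : ℂ) + t * Complex.I) * y)) := by
    intro y
    push_cast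
    rw [Complex.sin, show (-(τ : ℂ) - t * Complex.I) * y = -(y * τ) + -(t * y) * Complex.I by ring,
      show (-(τ : ℂ) + t * Complex.I) * y = -(y * τ) + (t * y) * Complex.I by ring,
      Complex.exp_add, Complex.exp_add]
    ring
  simp_rw [e]
  rw [integral_const_mul, integral_sub i2 i1, integral_exp_mul_complex_Ioi h1,
    integral_exp_mul_complex_Ioi h2]
  have n1 : (-(τ : ℂ) + t * Complex.I) ≠ 0 := fun h => by rw [h] at h1; simp at h1
  have n2 : (-(τ : ℂ) - t * Complex.I) ≠ 0 := fun h => by rw [h] at h2; simp at h2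
  have n3 : ((t : ℂ) ^ 2 + (τ : ℂ) ^ 2) ≠ 0 := by
    have : 0 < t ^ 2 + τ ^ 2 := by positivity
    exact_mod_cast this.ne'
  have n4 : (-(τ : ℂ) - t * Complex.I) * (-(τ : ℂ) + t * Complex.I) = (t : ℂ) ^ 2 + (τ : ℂ) ^ 2 := by
    linear_combination (-(t : ℂ) ^ 2) * Complex.I_sq
  push_cast
  simp only [mul_zero, Complex.exp_zero]
  rw [div_sub_div _ _ n2 n1, n4, ← mul_div_assoc]
  congr 1
  linear_combination (-1 : ℂ) * (t : ℂ) * Complex.I_sq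

lemma fl_fub2 (x : ℝ) (m : ℕ) (τ : ℝ) (hτ : 0 < τ) :
    ∫ y in Set.Ioi (0 : ℝ), flJ x m y * ((Real.exp (-(y * τ)) : ℝ) : ℂ) =
      ∫ t in Set.Ioi (0 : ℝ), ((t ^ m : ℝ) : ℂ) * Complex.exp (-(1 + Complex.I * x) * t) *
        ((t / (t ^ 2 + τ ^ 2) : ℝ) : ℂ) := by
  have hprod : Integrable (Function.uncurry fun y t : ℝ =>
      (((t ^ m : ℝ) : ℂ) * Complex.exp (-(1 + Complex.I * x) * t) * Real.sin (t * y)) *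
        ((Real.exp (-(y * τ)) : ℝ) : ℂ))
      ((volume.restrict (Set.Ioi 0)).prod (volume.restrict (Set.Ioi 0))) := by
    have hb : IntegrableOn (fun y : ℝ => Real.exp (-τ * y)) (Set.Ioi 0) :=
      integrableOn_exp_mul_Ioi (by linarith) 0
    refine (hb.mul_prod (fl_intN m x).norm).mono ?_ ?_
    · apply Measurable.aestronglyMeasurable
      simp only [Function.uncurry_def]
      fun_prop
    · refine Filter.Eventually.of_forall fun z => ?_
      simp only [Function.uncurry]
      rw [norm_mul, norm_mul (_ * _) ((Real.sin _ : ℝ) : ℂ), norm_mul (Real.exp _), norm_norm, Complex.norm_real (Real.sin _),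
        Complex.norm_real (Real.exp _), mul_comm z.1, neg_mul τ, mul_comm ‖Real.exp _‖]
      gcongr
      exact mul_le_of_le_one_right (norm_nonneg _) (Real.abs_sin_le_one _)
  have hsw := integral_integral_swap hprod
  calc _ = _ := by
        simp only [flJ]
        simp_rw [← integral_mul_const]
        exact hsw
    _ = _ := by
        refine setIntegral_congr_fun measurableSet_Ioi fun t ht => ?_
        rw [← fl_sinlap t τ ht hτ, ← integral_const_mul]
        simp only [mul_assoc]

lemma fl_core (x : ℝ) (m : ℕ) (hm : 1 ≤ m) (α : ℝ) (hα : α ∈ Set.Ioo (0 : ℝ) 2) :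
    (Real.Gamma α : ℂ) * ∫ y in Set.Ioi (0 : ℝ), flJ x m y * ((y ^ (-α) : ℝ) : ℂ) =
      flB α * (Real.Gamma (m + α) * (1 + Complex.I * x) ^ (-((m : ℂ) + α))) := by
  have hα0 := hα.1
  have hα2 := hα.2
  have hG := Real.Gamma_pos_of_pos hα.1
  have hgint : ∀ y : ℝ, 0 < y →
      ∫ τ in Set.Ioi (0 : ℝ), τ ^ (α - 1) * Real.exp (-(y * τ)) = Real.Gamma α * y ^ (-α) := by
    intro y hy
    rw [Real.integral_rpow_mul_exp_neg_mul_Ioi hα.1 hy, one_div, Real.inv_rpow hy.le,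
      Real.rpow_neg hy.le, mul_comm]
  have hgi : ∀ y : ℝ, 0 < y →
      IntegrableOn (fun τ : ℝ => τ ^ (α - 1) * Real.exp (-(y * τ))) (Set.Ioi 0) := by
    intro y hy
    have h := hgint y hy
    by_contra hcon
    rw [integral_undef hcon] at h
    have : 0 < Real.Gamma α * y ^ (-α) := by positivity
    linarith
  -- first exchange
  have hprod1 : Integrable (Function.uncurry fun y τ : ℝ =>
      flJ x m y * ((τ ^ (α - 1) * Real.exp (-(y * τ)) : ℝ) : ℂ))
      ((volume.restrict (Set.Ioi 0)).prod (volume.restrict (Set.Ioi 0))) := by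
    rw [integrable_prod_iff]
    · constructor
      · filter_upwards [ae_restrict_mem measurableSet_Ioi] with y hy
        exact ((hgi y hy).ofReal (𝕜 := ℂ)).const_mul (flJ x m y)
      · refine ((flJ_intOn x m hm α hα).norm.const_mul (Real.Gamma α)).congr ?_
        filter_upwards [ae_restrict_mem measurableSet_Ioi] with y hy
        have hy0 : (0 : ℝ) < y := hy
        rw [norm_mul, Complex.norm_real, Real.norm_of_nonneg (by positivity), mul_left_comm,
          ← hgint y hy, ← integral_const_mul]
        refine setIntegral_congr_fun measurableSet_Ioi fun τ hτ => ?_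
        have hτ0 : (0 : ℝ) < τ := hτ
        simp only [Function.uncurry]
        rw [norm_mul, Complex.norm_real, Real.norm_of_nonneg (by positivity)]
    · apply Measurable.aestronglyMeasurable
      have := (flJ_cont x m).measurable
      simp only [Function.uncurry_def]
      fun_prop
  have hsw1 := integral_integral_swap hprod1
  -- third exchange
  have hprod3 : Integrable (Function.uncurry fun τ t : ℝ =>
      (((t ^ (m + 1) : ℝ) : ℂ) * Complex.exp (-(1 + Complex.I * x) * t)) *
        ((τ ^ (α - 1) / (t ^ 2 + τ ^ 2) : ℝ) : ℂ))
      ((volume.restrict (Set.Ioi 0)).prod (volume.restrict (Set.Ioi 0))) := by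
    rw [integrable_prod_iff']
    · constructor
      · filter_upwards [ae_restrict_mem measurableSet_Ioi] with t ht
        exact ((fl_beta_int α hα t ht).ofReal (𝕜 := ℂ)).const_mul
          (((t ^ (m + 1) : ℝ) : ℂ) * Complex.exp (-(1 + Complex.I * x) * t))
      · have hb := Real.GammaIntegral_convergent (s := (m : ℝ) + α) (by positivity)
        refine (hb.const_mul (flB α)).congr ?_
        filter_upwards [ae_restrict_mem measurableSet_Ioi] with t ht
        have ht0 : (0 : ℝ) < t := ht
        have : flB α * (Real.exp (-t) * t ^ ((m : ℝ) + α - 1)) =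
            (t ^ (m + 1) * Real.exp (-t)) * (flB α * t ^ (α - 2)) := by
          rw [show (m : ℝ) + α - 1 = ((m + 1 : ℕ) : ℝ) + (α - 2) by push_cast; ring,
            Real.rpow_add ht0, Real.rpow_natCast]
          ring
        rw [this, ← fl_beta α hα t ht, ← integral_const_mul]
        refine setIntegral_congr_fun measurableSet_Ioi fun τ hτ => ?_
        have hτ0 : (0 : ℝ) < τ := hτ
        simp only [Function.uncurry]
        rw [norm_mul, norm_mul, fl_norm_exp, Complex.norm_real, Complex.norm_real,
          Real.norm_of_nonneg (by positivity), Real.norm_of_nonneg (by positivity)]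
    · apply Measurable.aestronglyMeasurable
      simp only [Function.uncurry_def]
      fun_prop
  have hsw3 := integral_integral_swap hprod3
  calc (Real.Gamma α : ℂ) * ∫ y in Set.Ioi (0 : ℝ), flJ x m y * ((y ^ (-α) : ℝ) : ℂ)
      = ∫ y in Set.Ioi (0 : ℝ), ∫ τ in Set.Ioi (0 : ℝ),
          flJ x m y * ((τ ^ (α - 1) * Real.exp (-(y * τ)) : ℝ) : ℂ) := by
        rw [← integral_const_mul]
        refine setIntegral_congr_fun measurableSet_Ioi fun y hy => ?_
        rw [integral_const_mul, integral_complex_ofReal, hgint y hy]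
        push_cast
        ring
    _ = ∫ τ in Set.Ioi (0 : ℝ), ∫ y in Set.Ioi (0 : ℝ),
          flJ x m y * ((τ ^ (α - 1) * Real.exp (-(y * τ)) : ℝ) : ℂ) := hsw1
    _ = ∫ τ in Set.Ioi (0 : ℝ), ∫ t in Set.Ioi (0 : ℝ),
        (((t ^ (m + 1) : ℝ) : ℂ) * Complex.exp (-(1 + Complex.I * x) * t)) *
        ((τ ^ (α - 1) / (t ^ 2 + τ ^ 2) : ℝ) : ℂ) := by
        refine setIntegral_congr_fun measurableSet_Ioi fun τ hτ => ?_
        have e : ∀ y : ℝ, flJ x m y * ((τ ^ (α - 1) * Real.exp (-(y * τ)) : ℝ) : ℂ) =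
            ((τ ^ (α - 1) : ℝ) : ℂ) * (flJ x m y * ((Real.exp (-(y * τ)) : ℝ) : ℂ)) := by
          intro y; push_cast; ring
        simp only [e]
        rw [integral_const_mul, fl_fub2 x m τ hτ, ← integral_const_mul]
        refine setIntegral_congr_fun measurableSet_Ioi fun t ht => ?_
        push_cast
        ring
    _ = ∫ t in Set.Ioi (0 : ℝ), ∫ τ in Set.Ioi (0 : ℝ),
        (((t ^ (m + 1) : ℝ) : ℂ) * Complex.exp (-(1 + Complex.I * x) * t)) *
        ((τ ^ (α - 1) / (t ^ 2 + τ ^ 2) : ℝ) : ℂ) := hsw3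
    _ = ∫ t in Set.Ioi (0 : ℝ), (flB α : ℂ) *
        (((t ^ ((m : ℝ) + α - 1) : ℝ) : ℂ) * Complex.exp (-(1 + Complex.I * x) * t)) := by
        refine setIntegral_congr_fun measurableSet_Ioi fun t ht => ?_
        have ht0 : (0 : ℝ) < t := ht
        rw [integral_const_mul, integral_complex_ofReal, fl_beta α hα t ht,
          show (m : ℝ) + α - 1 = ((m + 1 : ℕ) : ℝ) + (α - 2) by push_cast; ring,
          Real.rpow_add ht0, Real.rpow_natCast]
        push_cast
        ring
    _ = _ := by
        rw [integral_const_mul, fl_lap _ (by positivity)]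
        push_cast
        rfl


lemma fl_gbinom_nat (n k : ℕ) : gbinomR (n : ℝ) k = (n.choose k : ℝ) := by
  rw [gbinomR, Nat.cast_choose_eq_descPochhammer_div, descPochhammer_eval_eq_prod_range]

lemma fl_gbinom_gamma (α : ℝ) (hα : 0 < α) (k : ℕ) :
    (-1 : ℝ) ^ k * Real.Gamma (k + 1 + α) / (k.factorial : ℝ) =
      Real.Gamma (1 + α) * gbinomR (-1 - α) k := by
  have h : (-1 : ℝ) ^ k * Real.Gamma (k + 1 + α) =
      Real.Gamma (1 + α) * ∏ i ∈ Finset.range k, (-1 - α - (i : ℝ)) := by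
    induction k with
    | zero => simp
    | succ k ih =>
      rw [Finset.prod_range_succ, ← mul_assoc, ← ih]
      push_cast
      rw [show (k : ℝ) + 1 + 1 + α = (k + 1 + α) + 1 by ring, Real.Gamma_add_one (by positivity)]
      ring
  rw [gbinomR, h, mul_div_assoc]

lemma fl_const (α : ℝ) (hα : α ∈ Set.Ioo (0 : ℝ) 2) :
    cFrac α / α * (2 * flB α / Real.Gamma α) = 1 := by
  have hα0 := hα.1
  have h1 := Real.Gamma_pos_of_pos (s := α / 2) (by linarith [hα.1])
  have h2 := Real.Gamma_pos_of_pos (s := 1 - α / 2) (by linarith [hα.2])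
  have h3 := Real.Gamma_pos_of_pos hα.1
  have hd := Real.Gamma_mul_Gamma_add_half (α / 2)
  rw [show 2 * (α / 2) = α by ring] at hd
  have hpi : 0 < √Real.pi := Real.sqrt_pos.mpr Real.pi_pos
  have h4 : (2 : ℝ) ^ (α - 1) * 2 ^ (1 - α) = 1 := by
    rw [← Real.rpow_add two_pos]; simp
  rw [cFrac, flB, show 1 / 2 + α / 2 = α / 2 + 1 / 2 by ring]
  generalize Real.Gamma (1 - α / 2) = g2 at *
  generalize Real.Gamma (α / 2 + 1 / 2) = g3 at *
  generalize Real.Gamma (α / 2) = g1 at *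
  generalize Real.Gamma α = g at *
  generalize √Real.pi = p at *
  generalize (2:ℝ) ^ (α - 1) = u at *
  generalize (2:ℝ) ^ (1 - α) = v at *
  have a1 := hα0.ne'
  have a2 := h2.ne'
  have a3 := h3.ne'
  have a4 := hpi.ne'
  field_simp
  linear_combination u * hd + g * p * h4

/-- derivative of the Christov function -/
noncomputable def flD (n : ℕ) (x : ℝ) : ℂ :=
  ∑ k ∈ Finset.range (n + 1), (-2 : ℂ) ^ k * (n.choose k : ℂ) *
    (-(k + 1) * Complex.I * ((1 + Complex.I * (x : ℂ)) ^ (k + 1 + 1))⁻¹)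

lemma fl_christov (n : ℕ) : christov (n : ℤ) = fun x : ℝ =>
    ∑ k ∈ Finset.range (n + 1), (-2 : ℂ) ^ k * (n.choose k : ℂ) *
      ((1 + Complex.I * (x : ℂ)) ^ (k + 1))⁻¹ := by
  ext x
  have hs := fl_ne x
  have e1 : Complex.I * (x : ℂ) - 1 = -2 + (1 + Complex.I * x) := by ring
  have e2 : Complex.I * (x : ℂ) + 1 = 1 + Complex.I * x := by ring
  rw [christov, e1, e2, zpow_natCast, show (n : ℤ) + 1 = ((n + 1 : ℕ) : ℤ) by push_cast; rfl,
    zpow_natCast, add_pow, Finset.sum_div]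
  refine Finset.sum_congr rfl fun k hk => ?_
  have hk' : k ≤ n := by simpa [Nat.lt_succ_iff] using hk
  have : (1 + Complex.I * (x : ℂ)) ^ (n + 1) =
      (1 + Complex.I * (x : ℂ)) ^ (n - k) * (1 + Complex.I * (x : ℂ)) ^ (k + 1) := by
    rw [← pow_add]; congr 1; omega
  rw [this]
  field_simp

lemma fl_christov_deriv (n : ℕ) (x : ℝ) : HasDerivAt (christov (n : ℤ)) (flD n x) x := by
  rw [fl_christov, flD]
  refine HasDerivAt.fun_sum fun k _ => ?_
  refine HasDerivAt.const_mul _ ?_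
  have e0 : HasDerivAt (fun y : ℝ => 1 + Complex.I * (y : ℂ)) (Complex.I * 1) x :=
    ((Complex.ofRealCLM.hasDerivAt (x := x)).const_mul Complex.I).const_add 1
  have hs := fl_ne x
  convert! (e0.pow (k + 1)).inv (pow_ne_zero _ hs) using 1
  simp only [Pi.pow_apply]
  push_cast
  field_simp
  ring

lemma fl_SC' (n : ℕ) (x : ℝ) : SC' n x = -(flD n x).im := by
  have h := (Complex.imCLM.hasFDerivAt.comp_hasDerivAt x (fl_christov_deriv n x)).neg
  exact h.deriv

lemma fl_diff (n : ℕ) (x y : ℝ) : SC' n (x - y) - SC' n (x + y) =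
    -(∑ k ∈ Finset.range (n + 1), (-2 : ℂ) ^ k * (n.choose k : ℂ) * (2 / (k.factorial : ℂ)) *
      flJ x (k + 1) y).im := by
  rw [fl_SC', fl_SC', neg_sub_neg, ← neg_sub, ← Complex.sub_im]
  congr 2
  rw [flD, flD, ← Finset.sum_sub_distrib]
  refine Finset.sum_congr rfl fun k _ => ?_
  rw [← mul_sub, ← mul_sub, flJ_eq, Nat.factorial_succ]
  have hk : (k.factorial : ℂ) ≠ 0 := by exact_mod_cast k.factorial_ne_zero
  have hk1 : (k : ℂ) + 1 ≠ 0 := by exact_mod_cast k.succ_ne_zero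
  push_cast
  field_simp
  rw [Complex.I_sq]
  ring

lemma fl_main (α : ℝ) (hα : α ∈ Set.Ioo (0 : ℝ) 2) (n : ℕ) (x : ℝ) :
    IntegrableOn (fun y : ℝ => (SC' n (x - y) - SC' n (x + y)) * y ^ (-α)) (Set.Ioi 0) ∧
    (cFrac α / α) * ∫ y in Set.Ioi (0 : ℝ), (SC' n (x - y) - SC' n (x + y)) * y ^ (-α) =
     -(Real.Gamma (1 + α) * ∑ k ∈ Finset.range (n + 1), (n.choose k : ℂ) * (gbinomR (-1 - α) k : ℂ) *
        2 ^ k * (1 + Complex.I * x) ^ (-((k : ℂ) + 1 + α))).im := by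
  set A : ℕ → ℂ := fun k => (-2 : ℂ) ^ k * (n.choose k : ℂ) * (2 / (k.factorial : ℂ)) with hA
  set W : ℝ → ℂ := fun y => ∑ k ∈ Finset.range (n + 1),
    A k * (flJ x (k + 1) y * ((y ^ (-α) : ℝ) : ℂ)) with hW
  have hi : ∀ k, IntegrableOn (fun y : ℝ => A k * (flJ x (k + 1) y * ((y ^ (-α) : ℝ) : ℂ)))
      (Set.Ioi 0) := fun k => (flJ_intOn x (k + 1) (by omega) α hα).const_mul _
  have hWi : IntegrableOn W (Set.Ioi 0) := integrable_finsetSum _ fun k _ => hi k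
  have heq : (fun y : ℝ => (SC' n (x - y) - SC' n (x + y)) * y ^ (-α)) = fun y => -(W y).im := by
    ext y
    rw [fl_diff, hW, neg_mul, ← Complex.im_mul_ofReal, Finset.sum_mul]
    simp only [mul_assoc, hA]
  have hIntg : ∫ y in Set.Ioi (0 : ℝ), (W y).im = (∫ y in Set.Ioi (0 : ℝ), W y).im :=
    integral_im hWi
  rw [heq]
  refine ⟨hWi.im.neg, ?_⟩
  rw [integral_neg, hIntg, mul_neg, ← Complex.im_ofReal_mul]
  congr 2
  rw [hW, integral_finsetSum _ fun k _ => hi k, Finset.mul_sum, Finset.mul_sum]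
  refine Finset.sum_congr rfl fun k _ => ?_
  have hG : (Real.Gamma α : ℂ) ≠ 0 := by
    exact_mod_cast (Real.Gamma_pos_of_pos hα.1).ne'
  have hcore := fl_core x (k + 1) (by omega) α hα
  have hc : ((cFrac α / α * (2 * flB α / Real.Gamma α) : ℝ) : ℂ) = 1 := by
    rw [fl_const α hα]; simp
  have hg : (((-1 : ℝ) ^ k * Real.Gamma (k + 1 + α) / (k.factorial : ℝ) : ℝ) : ℂ) =
      ((Real.Gamma (1 + α) * gbinomR (-1 - α) k : ℝ) : ℂ) := by
    rw [fl_gbinom_gamma α hα.1 k]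
  rw [integral_const_mul]
  rw [mul_comm, ← eq_div_iff hG] at hcore
  rw [hcore]
  push_cast at hc hg ⊢
  rw [hA]
  simp only
  rw [show (-2 : ℂ) ^ k = (-1) ^ k * 2 ^ k by rw [← mul_pow]; norm_num]
  generalize (1 + Complex.I * (x : ℂ)) ^ (-((k : ℂ) + 1 + α)) = S
  linear_combination (2 : ℂ) ^ k * (n.choose k : ℂ) * S * hg +
    (-1) ^ k * 2 ^ k * (n.choose k : ℂ) * S * (Real.Gamma (k + 1 + α) : ℂ) / (k.factorial : ℂ) * hc

lemma fl_HR (α : ℝ) (l : ℕ) :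
    HR α l = ∑ k ∈ Finset.range (l + 1), (l.choose k : ℝ) * gbinomR (-1 - α) k * 2 ^ k := by
  simp only [HR, fl_gbinom_nat]

lemma fl_binom_swap (g : ℕ → ℂ) (n : ℕ) (z : ℂ) :
    ∑ k ∈ Finset.range (n + 1), (n.choose k : ℂ) * g k * (1 + z) ^ (n - k) =
      ∑ l ∈ Finset.range (n + 1), (n.choose l : ℂ) * z ^ (n - l) *
        ∑ k ∈ Finset.range (l + 1), (l.choose k : ℂ) * g k := by
  have h1 : ∀ k ∈ Finset.range (n + 1), (n.choose k : ℂ) * g k * (1 + z) ^ (n - k) =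
      ∑ l ∈ Finset.range (n + 1), (if k ≤ l then
        (n.choose l : ℂ) * z ^ (n - l) * ((l.choose k : ℂ) * g k) else 0) := by
    intro k hk
    have hk' : k ≤ n := by simpa [Nat.lt_succ_iff] using hk
    rw [← Finset.sum_filter, add_pow, Finset.mul_sum]
    refine Finset.sum_bij' (fun j _ => k + j) (fun l _ => l - k) ?_ ?_ ?_ ?_ ?_
    · intro j hj; simp at hj ⊢; omega
    · intro l hl; simp at hl ⊢; omega
    · intro j hj; simp
    · intro l hl; simp at hl ⊢; omega
    · intro j hj
      have hc := Nat.choose_mul (n := n) (k := k + j) (s := k) (by omega)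
      rw [Nat.add_sub_cancel_left] at hc
      have hc' : (n.choose (k + j) : ℂ) * ((k + j).choose k : ℂ) =
        (n.choose k : ℂ) * ((n - k).choose j : ℂ) := by exact_mod_cast hc
      rw [show n - (k + j) = n - k - j by omega, one_pow]
      linear_combination (-1 : ℂ) * z ^ (n - k - j) * g k * hc'
  rw [Finset.sum_congr rfl h1, Finset.sum_comm]
  refine Finset.sum_congr rfl fun l hl => ?_
  have hl' : l ≤ n := by simpa [Nat.lt_succ_iff] using hl
  rw [← Finset.sum_filter, Finset.mul_sum]
  refine Finset.sum_congr ?_ fun _ _ => rfl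
  ext k; simp; omega

lemma fl_parity (f : ℕ → ℂ) (n : ℕ) : ∑ j ∈ Finset.range (n + 1), f j =
    ∑ l ∈ (Finset.range (n + 1)).filter (fun l => 2 * l ≤ n), f (2 * l) +
    ∑ l ∈ (Finset.range (n + 1)).filter (fun l => 2 * l + 1 ≤ n), f (2 * l + 1) := by
  rw [← Finset.sum_filter_add_sum_filter_not (Finset.range (n + 1)) (fun j => j % 2 = 0)]
  congr 1
  · symm
    refine Finset.sum_bij' (fun l _ => 2 * l) (fun j _ => j / 2) ?_ ?_ ?_ ?_ ?_
    · intro j hj; simp at hj ⊢; omega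
    · intro l hl; simp at hl ⊢; omega
    · intro j hj; simp
    · intro l hl; simp at hl ⊢; omega
    · intro j hj; rfl
  · symm
    refine Finset.sum_bij' (fun l _ => 2 * l + 1) (fun j _ => j / 2) ?_ ?_ ?_ ?_ ?_
    · intro j hj; simp at hj ⊢; omega
    · intro l hl; simp at hl ⊢; omega
    · intro j hj; show (2 * j + 1) / 2 = j; omega
    · intro l hl; simp at hl ⊢; omega
    · intro j hj; rfl

lemma fl_polar (b x : ℝ) : (1 + Complex.I * (x : ℂ)) ^ (-(b : ℂ)) =
    (((1 + x ^ 2) ^ (b / 2) : ℝ) : ℂ)⁻¹ * Complex.exp (-(b * Real.arctan x : ℝ) * Complex.I) := by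
  have hp : 0 < 1 + x ^ 2 := by positivity
  have hs : 1 + Complex.I * (x : ℂ) =
      Complex.exp ((Real.log (1 + x ^ 2) / 2 : ℝ) + Real.arctan x * Complex.I) := by
    rw [Complex.exp_add, Complex.exp_mul_I, ← Complex.ofReal_exp, ← Complex.ofReal_cos,
      ← Complex.ofReal_sin, Real.cos_arctan, Real.sin_arctan, ← Real.log_sqrt hp.le,
      Real.exp_log (Real.sqrt_pos.mpr hp)]
    have : ((√(1 + x ^ 2) : ℝ) : ℂ) ≠ 0 := by exact_mod_cast (Real.sqrt_pos.mpr hp).ne'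
    push_cast
    field_simp
  have hlog : Complex.log (1 + Complex.I * (x : ℂ)) =
      (Real.log (1 + x ^ 2) / 2 : ℝ) + Real.arctan x * Complex.I := by
    rw [hs, Complex.log_exp]
    · simp [-Complex.ofReal_arctan]; linarith [Real.neg_pi_div_two_lt_arctan x, Real.pi_pos]
    · simp [-Complex.ofReal_arctan]; linarith [Real.arctan_lt_pi_div_two x, Real.pi_pos]
  rw [Complex.cpow_def_of_ne_zero (fl_ne x), hlog, Real.rpow_def_of_pos hp, Complex.ofReal_exp,
    ← Complex.exp_neg, ← Complex.exp_add]
  congr 1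
  push_cast
  ring

theorem fracLap_SC (α : ℝ) (hα : α ∈ Set.Ioo (0 : ℝ) 2) (n : ℕ) (x : ℝ) :
    IntegrableOn (fun y : ℝ => (SC' n (x - y) - SC' n (x + y)) * y ^ (-α)) (Set.Ioi 0) ∧
    (cFrac α / α) * ∫ y in Set.Ioi (0 : ℝ), (SC' n (x - y) - SC' n (x + y)) * y ^ (-α) =
      (Real.Gamma (1 + α) / (1 + x ^ 2) ^ (((n : ℝ) + 1 + α) / 2)) *
          Real.cos (((n : ℝ) + 1 + α) * arccot x - Real.pi * α / 2) *
          ∑ l ∈ (Finset.range (n + 1)).filter (fun l => 2 * l ≤ n),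
            (-1 : ℝ) ^ l * gbinomR (n : ℝ) (2 * l) * x ^ (n - 2 * l) * HR α (2 * l)
        + (Real.Gamma (1 + α) / (1 + x ^ 2) ^ (((n : ℝ) + 1 + α) / 2)) *
          Real.sin (((n : ℝ) + 1 + α) * arccot x - Real.pi * α / 2) *
          ∑ l ∈ (Finset.range (n + 1)).filter (fun l => 2 * l + 1 ≤ n),
            (-1 : ℝ) ^ l * gbinomR (n : ℝ) (2 * l + 1) * x ^ (n - 1 - 2 * l) *
              HR α (2 * l + 1) := by
  obtain ⟨h1, h2⟩ := fl_main α hα n x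
  refine ⟨h1, ?_⟩
  rw [h2]
  set P := ∑ l ∈ (Finset.range (n + 1)).filter (fun l => 2 * l ≤ n),
            (-1 : ℝ) ^ l * gbinomR (n : ℝ) (2 * l) * x ^ (n - 2 * l) * HR α (2 * l) with hP
  set Q := ∑ l ∈ (Finset.range (n + 1)).filter (fun l => 2 * l + 1 ≤ n),
            (-1 : ℝ) ^ l * gbinomR (n : ℝ) (2 * l + 1) * x ^ (n - 1 - 2 * l) *
              HR α (2 * l + 1) with hQ
  set b : ℝ := (n : ℝ) + 1 + α with hb
  set θ : ℝ := b * arccot x - Real.pi * α / 2 with hθ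
  have hs := fl_ne x
  -- factor out the top power
  have s1 : ∑ k ∈ Finset.range (n + 1), (n.choose k : ℂ) * (gbinomR (-1 - α) k : ℂ) *
        2 ^ k * (1 + Complex.I * x) ^ (-((k : ℂ) + 1 + α)) =
      (1 + Complex.I * (x : ℂ)) ^ (-(b : ℂ)) * ∑ k ∈ Finset.range (n + 1),
        (n.choose k : ℂ) * ((gbinomR (-1 - α) k : ℂ) * 2 ^ k) * (1 + Complex.I * x) ^ (n - k) := by
    rw [Finset.mul_sum]
    refine Finset.sum_congr rfl fun k hk => ?_
    have hk' : k ≤ n := by simpa [Nat.lt_succ_iff] using hk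
    have : (1 + Complex.I * (x : ℂ)) ^ (-((k : ℂ) + 1 + α)) =
        (1 + Complex.I * (x : ℂ)) ^ (-(b : ℂ)) * (1 + Complex.I * x) ^ (n - k) := by
      rw [← Complex.cpow_natCast, ← Complex.cpow_add _ _ hs, Nat.cast_sub hk', hb]
      congr 1
      push_cast
      ring
    rw [this]
    ring
  have s2 : ∑ l ∈ Finset.range (n + 1), (n.choose l : ℂ) * (Complex.I * x) ^ (n - l) *
        ∑ k ∈ Finset.range (l + 1), (l.choose k : ℂ) * ((gbinomR (-1 - α) k : ℂ) * 2 ^ k) =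
      Complex.I ^ n * (P - Complex.I * Q) := by
    have e : ∀ l ∈ Finset.range (n + 1), (n.choose l : ℂ) * (Complex.I * x) ^ (n - l) *
        ∑ k ∈ Finset.range (l + 1), (l.choose k : ℂ) * ((gbinomR (-1 - α) k : ℂ) * 2 ^ k) =
        Complex.I ^ n * ((-Complex.I) ^ l * (gbinomR n l : ℂ) * (x : ℂ) ^ (n - l) * (HR α l : ℂ)) := by
      intro l hl
      have hl' : l ≤ n := by simpa [Nat.lt_succ_iff] using hl
      rw [fl_HR, fl_gbinom_nat]
      push_cast
      simp only [mul_assoc]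
      have hI : Complex.I ^ (n - l) = Complex.I ^ n * (-Complex.I) ^ l := by
        rw [← Nat.sub_add_cancel hl', pow_add, mul_assoc, ← mul_pow]
        simp
      rw [mul_pow, hI]
      ring
    rw [Finset.sum_congr rfl e, ← Finset.mul_sum, fl_parity, hP, hQ]
    congr 1
    push_cast
    rw [sub_eq_add_neg]
    congr 1
    · refine Finset.sum_congr rfl fun l _ => ?_
      rw [pow_mul]; simp
    · rw [Finset.mul_sum, ← Finset.sum_neg_distrib]
      refine Finset.sum_congr rfl fun l _ => ?_
      rw [pow_succ, pow_mul, show n - (2 * l + 1) = n - 1 - 2 * l by omega]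
      simp
      ring
  have s3 : (1 + Complex.I * (x : ℂ)) ^ (-(b : ℂ)) * Complex.I ^ n =
      (((1 + x ^ 2) ^ (b / 2) : ℝ) : ℂ)⁻¹ * (-Complex.I * Complex.exp (θ * Complex.I)) := by
    rw [fl_polar, mul_assoc]
    congr 1
    have hI : Complex.exp ((Real.pi / 2 : ℂ) * Complex.I) = Complex.I := by
      exact Complex.exp_pi_div_two_mul_I
    have hI' : Complex.exp (-(Real.pi / 2 : ℂ) * Complex.I) = -Complex.I := by
      rw [neg_mul, Complex.exp_neg, hI, Complex.inv_I]
    have hIn : Complex.I ^ n = Complex.exp (n * ((Real.pi / 2 : ℂ) * Complex.I)) := by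
      rw [Complex.exp_nat_mul, hI]
    rw [hIn, ← hI', ← Complex.exp_add, ← Complex.exp_add, hθ, hb, arccot]
    congr 1
    push_cast
    ring
  rw [s1, fl_binom_swap, s2, ← mul_assoc _ (Complex.I ^ n), s3]
  have hE : Complex.exp (θ * Complex.I) = Real.cos θ + Real.sin θ * Complex.I := by
    rw [Complex.exp_mul_I]; push_cast; rfl
  rw [hE]
  have : (Real.Gamma (1 + α) : ℂ) * ((((1 + x ^ 2) ^ (b / 2) : ℝ) : ℂ)⁻¹ *
      (-Complex.I * (Real.cos θ + Real.sin θ * Complex.I)) * (P - Complex.I * Q)) =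
      ((Real.Gamma (1 + α) / (1 + x ^ 2) ^ (b / 2) : ℝ) : ℂ) *
      (((Real.sin θ * P - Real.cos θ * Q : ℝ) : ℂ) -
        ((Real.cos θ * P + Real.sin θ * Q : ℝ) : ℂ) * Complex.I) := by
    generalize (1 + x ^ 2) ^ (b / 2) = r
    generalize hc : Real.cos θ = c
    generalize hd : Real.sin θ = d
    push_cast
    linear_combination (Real.Gamma (1 + α) : ℂ) * (r : ℂ)⁻¹ *
      (c * Q - d * P + Complex.I * d * Q) * Complex.I_sq
  rw [this, Complex.im_ofReal_mul]
  simp only [Complex.sub_im, Complex.ofReal_im, Complex.mul_im, Complex.I_re, Complex.I_im,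
    Complex.ofReal_re]
  ring
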